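/- Let f ∈ ℂ[x₁,…,x_{n+1}] be a strongly tame polynomial of weighted degree d, b a regular value of f, and β ↦ d_β a function such that the monomials x₀^{β₀}x^β, β ∈ I, 0 ≤ β₀ ≤ d_β − 1, form a ℂ-basis of ℂ[x₀,x]/⟨∂F_b/∂xᵢ : i = 0,…,n+1⟩. Then for every β ∈ I one has d_β < d·(n + 2 − A_β), where A_β := Σᵢ (βᵢ+1)αᵢ/d. Equivalently, every basis monomial x₀^{β₀}x^β satisfies 0 < A_β + (β₀+1)/d < n + 2. -/

import Mathlib

open MvPolynomial

noncomputable section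

/-- The homogenization `F = Σ_{i=0}^d fᵢ·x₀^{d-i}` of `f`. -/
def homogenization (n d : ℕ) (α : Fin (n + 1) → ℕ)
    (f : MvPolynomial (Fin (n + 1)) ℂ) : MvPolynomial (Fin (n + 2)) ℂ :=
  ∑ i ∈ Finset.range (d + 1),
    rename Fin.succ (weightedHomogeneousComponent α i f) * X 0 ^ (d - i)

/-- The ideal generated by all partial derivatives of `F_b = F - b·x₀^d`. -/
def fullJacobianIdeal (n d : ℕ) (α : Fin (n + 1) → ℕ)
    (f : MvPolynomial (Fin (n + 1)) ℂ) (b : ℂ) : Ideal (MvPolynomial (Fin (n + 2)) ℂ) :=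
  Ideal.span (Set.range fun i : Fin (n + 2) =>
    pderiv i (homogenization n d α f - C b * X 0 ^ d))

/-!
The polynomials `F_b` and `g` are weighted homogeneous of degree `d`, with finite-dimensional
Jacobian algebras. Let `G` be either of them and `w` the weights of its `N` variables. The partial
derivatives of `G`, homogeneous of degrees `d - wᵢ`, generate an ideal whose radical is the
maximal ideal at the origin; as there are `N` of them and the polynomial ring is Cohen–Macaulay,
they form a regular sequence. Hence the Hilbert series of the Jacobian algebra is
`∏ (1 - t ^ (d - wᵢ)) / ∏ (1 - t ^ wᵢ)`. It is a polynomial of degree at most `∑ (d - 2 wᵢ)`, so a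
homogeneous element of degree `D` with nonzero class satisfies `D + ∑ wᵢ ≤ ∑ (d - wᵢ) < N d`.
-/

section LocalAlgebra

open RingTheory.Sequence IsLocalRing CategoryTheory Abelian

open scoped Pointwise

universe u

variable {R : Type u} [CommRing R] {M : Type u} [AddCommGroup M] [Module R M]

lemma smul_top_quotSMulTop_lt_top {I : Ideal R} (hI : I • (⊤ : Submodule R M) < ⊤) {b : R}
    (hb : b ∈ I) : I • (⊤ : Submodule R (QuotSMulTop b M)) < ⊤ := by
  refine lt_top_iff_ne_top.mpr fun htop => hI.ne ?_
  have hle : b • (⊤ : Submodule R M) ≤ I • ⊤ := by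
    rw [← Submodule.ideal_span_singleton_smul]
    exact Submodule.smul_mono_left ((Ideal.span_singleton_le_iff_mem I).mpr hb)
  have hmap : (I • (⊤ : Submodule R M)).map (b • (⊤ : Submodule R M)).mkQ = ⊤ := by
    rwa [Submodule.map_smul'', Submodule.map_top, Submodule.range_mkQ]
  rw [← sup_eq_right.mpr hle, ← Submodule.comap_map_mkQ, hmap, Submodule.comap_top]

lemma isSMulRegular_of_mem_radical {b p : R} (hb : IsSMulRegular M b)
    (hbp : b ∈ (Module.annihilator R M ⊔ Ideal.span {p}).radical) : IsSMulRegular M p := by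
  obtain ⟨k, hk⟩ := hbp
  obtain ⟨a, ha, _, hc, hac⟩ := Submodule.mem_sup.mp hk
  obtain ⟨c, rfl⟩ := Ideal.mem_span_singleton'.mp hc
  refine IsSMulRegular.of_mul (a := c) fun y z (hyz : (c * p) • y = (c * p) • z) => hb.pow k ?_
  simp only [← hac, add_smul, Module.mem_annihilator.mp ha, hyz]

lemma annihilator_sup_le_annihilator_quotient {N : Submodule R M} {I : Ideal R}
    (h : I • (⊤ : Submodule R M) ≤ N) :
    Module.annihilator R M ⊔ I ≤ Module.annihilator R (M ⧸ N) := by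
  refine sup_le (LinearMap.annihilator_le_of_surjective _ N.mkQ_surjective) ?_
  rw [Submodule.annihilator_quotient]
  exact fun r hr => Submodule.mem_colon.mpr fun y hy => h (Submodule.smul_mem_smul hr hy)

lemma isWeaklyRegular_append_of_mem_radical {ps : List R} {b p : R}
    (hb : IsWeaklyRegular M (ps ++ [b]))
    (hbp : b ∈ (Module.annihilator R M ⊔ Ideal.ofList ps ⊔ Ideal.span {p}).radical) :
    IsWeaklyRegular M (ps ++ [p]) := by
  rw [isWeaklyRegular_append_iff, isWeaklyRegular_singleton_iff] at hb ⊢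
  exact ⟨hb.1, isSMulRegular_of_mem_radical hb.2 <| Ideal.radical_mono (sup_le_sup_right
    (annihilator_sup_le_annihilator_quotient le_rfl) _) hbp⟩

lemma exists_mem_maximalIdeal_forall_notMem [IsLocalRing R] {S : Set (Ideal R)} (hS : S.Finite)
    (hprime : ∀ Q ∈ S, Q.IsPrime) (hmax : maximalIdeal R ∉ S) :
    ∃ b ∈ maximalIdeal R, ∀ Q ∈ S, b ∉ Q := by
  contrapose! hmax with hcover
  refine (Ideal.subset_iUnion_iff_mem_of_isMaximal_of_finite hS ⊥ ⊥
    (fun Q hQ _ _ => hprime Q hQ) bot_ne_top bot_ne_top).mp fun x hx => ?_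
  obtain ⟨Q, hQ, hxQ⟩ := hcover x hx
  exact Set.mem_biUnion hQ hxQ

variable [IsNoetherianRing R] [Module.Finite R M]

/- Rees: the vanishing of `Ext i (R ⧸ I) M` for `i < k` characterises the existence of a regular
sequence of length `k` in `I`, and the long exact sequence of `0 → M → M → M/bM → 0` costs one
degree. -/
lemma exists_isRegular_quotSMulTop {I : Ideal R} (hI : I • (⊤ : Submodule R M) < ⊤)
    {rs : List R} (hrs : IsRegular M rs) (hrsI : ∀ r ∈ rs, r ∈ I)
    {b : R} (hb : IsSMulRegular M b) (hbI : b ∈ I) :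
    ∃ rs' : List R, rs'.length = rs.length - 1 ∧ (∀ r ∈ rs', r ∈ I) ∧
      IsRegular (QuotSMulTop b M) rs' := by
  have hsupp : Module.support R (ModuleCat.of R (R ⧸ I)) = PrimeSpectrum.zeroLocus I := by
    rw [Module.support_eq_zeroLocus, Ideal.annihilator_quotient]
  have hext := ModuleCat.subsingleton_ext_of_exists_isRegular I (ModuleCat.of R (R ⧸ I)) hsupp.le
    (ModuleCat.of R M) hI rs hrsI hrs
  refine ModuleCat.exists_isRegular_of_exists_subsingleton_ext I (rs.length - 1)
    (ModuleCat.of R (QuotSMulTop b M)) (smul_top_quotSMulTop_lt_top hI hbI)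
    (ModuleCat.of R (R ⧸ I)) hsupp fun i hi => ?_
  have hzero (j : ℕ) (hj : j < rs.length) :=
    AddCommGrpCat.isZero_of_iff_subsingleton.mpr (hext j hj)
  have hexact := Ext.covariant_sequence_exact₃' (ModuleCat.of R (R ⧸ I))
    (IsSMulRegular.smulShortComplex_shortExact (M := ModuleCat.of R M) hb) i (i + 1) rfl
  exact AddCommGrpCat.subsingleton_of_isZero <| hexact.isZero_of_both_zeros
    ((hzero i (by lia)).eq_zero_of_src _) ((hzero (i + 1) (by lia)).eq_zero_of_tgt _)

variable [IsLocalRing R]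

lemma exists_isSMulRegular_notMem_minimalPrimes {x : R} (hxm : x ∈ maximalIdeal R)
    (hx : IsSMulRegular M x) (A : Ideal R) :
    ∃ b ∈ maximalIdeal R, IsSMulRegular M b ∧
      ∀ Q ∈ A.minimalPrimes, b ∈ Q → Q = maximalIdeal R := by
  have hzeroDiv := biUnion_associatedPrimes_eq_compl_regular R M
  obtain ⟨b, hbm, hb⟩ := exists_mem_maximalIdeal_forall_notMem
    (S := associatedPrimes R M ∪ (A.minimalPrimes \ {maximalIdeal R}))
    ((associatedPrimes.finite R M).union
      (Ideal.finite_minimalPrimes_of_isNoetherianRing R A).sdiff)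
    (fun Q hQ => hQ.elim (fun h => h.isPrime) fun h => h.1.1.1)
    (fun hQ => hQ.elim
      (fun h => (hzeroDiv.subset (Set.mem_biUnion h hxm)) hx) fun h => h.2 rfl)
  refine ⟨b, hbm, ?_, fun Q hQ hbQ => by_contra fun hne => hb Q (.inr ⟨hQ, hne⟩) hbQ⟩
  by_contra hcon
  obtain ⟨Q, hQ, hbQ⟩ := Set.mem_iUnion₂.mp (hzeroDiv.superset hcon)
  exact hb Q (.inl hQ) hbQ

-- Krull: modulo `Q` the maximal ideal is minimal over `(x)`, so `R ⧸ Q` has dimension at most one.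
lemma eq_maximalIdeal_of_lt_of_maximalIdeal_le_radical {Q P : Ideal R} [Q.IsPrime] [P.IsPrime]
    (hQP : Q < P) {x : R} (hx : x ∈ maximalIdeal R)
    (hrad : maximalIdeal R ≤ (Q ⊔ Ideal.span {x}).radical) : P = maximalIdeal R := by
  by_contra hne
  have hPm : P < maximalIdeal R := (le_maximalIdeal Ideal.IsPrime.ne_top').lt_of_ne hne
  have hmin : maximalIdeal R ∈ (Q ⊔ Ideal.span {x}).minimalPrimes :=
    ⟨⟨inferInstance, sup_le (hQP.trans hPm).le ((Ideal.span_singleton_le_iff_mem _).mpr hx)⟩,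
      fun _ ⟨hP', hle⟩ _ => hrad.trans (hP'.radical_le_iff.mpr hle)⟩
  set π := Ideal.Quotient.mk Q
  have := Ideal.isPrime_map_quotientMk_of_isPrime hQP.le
  have := Ideal.isPrime_map_quotientMk_of_isPrime (hQP.trans hPm).le
  have hlt : P.map π < (maximalIdeal R).map π := by
    refine (Ideal.map_mono hPm.le).lt_of_ne fun heq => hne ?_
    rw [← Ideal.comap_map_mk hQP.le, heq, Ideal.comap_map_mk (hQP.trans hPm).le]
  have hheight : (P.map π).height = 0 := by
    have hle : (P.map π).height + 1 ≤ 0 + 1 :=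
      (Ideal.height_add_one_le_of_lt_of_isPrime hlt).trans
        ((Ideal.map_height_le_one_of_mem_minimalPrimes hmin).trans (zero_add 1).ge)
    exact nonpos_iff_eq_zero.mp ((ENat.add_le_add_iff_right ENat.one_ne_top).mp hle)
  rw [Ideal.height_eq_zero_iff, IsDomain.minimalPrimes_eq_singleton_bot, Set.mem_singleton_iff,
    Ideal.map_eq_bot_iff_le_ker, Ideal.mk_ker] at hheight
  exact hQP.not_ge hheight

lemma maximalIdeal_le_radical_sup_span_of_forall_notMem {A : Ideal R} {p b : R}
    (hp : p ∈ maximalIdeal R) (hrad : maximalIdeal R ≤ (A ⊔ Ideal.span {p}).radical)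
    (hb : ∀ Q ∈ A.minimalPrimes, b ∈ Q → Q = maximalIdeal R) :
    maximalIdeal R ≤ (A ⊔ Ideal.span {b}).radical := by
  rw [Ideal.radical_eq_sInf]
  refine le_sInf fun P ⟨hP, hPprime⟩ => ?_
  obtain ⟨Q, hQ, hQP⟩ := Ideal.exists_minimalPrimes_le (le_sup_left.trans hP)
  have hbP : b ∈ P := hP (Ideal.mem_sup_right (Ideal.mem_span_singleton_self b))
  have := hQ.1.1
  rcases hQP.eq_or_lt with rfl | hlt
  · exact (hb Q hQ hbP).ge
  · exact (eq_maximalIdeal_of_lt_of_maximalIdeal_le_radical hlt hp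
      (hrad.trans (Ideal.radical_mono (sup_le_sup_right hQ.1.2 _)))).ge

theorem isWeaklyRegular_of_maximalIdeal_le_radical {rs ps : List R} (hrs : IsRegular M rs)
    (hrsm : ∀ r ∈ rs, r ∈ maximalIdeal R) (hpsm : ∀ r ∈ ps, r ∈ maximalIdeal R)
    (hlen : ps.length ≤ rs.length)
    (hrad : maximalIdeal R ≤ (Module.annihilator R M ⊔ Ideal.ofList ps).radical) :
    IsWeaklyRegular M ps := by
  induction ps using List.reverseRecOn generalizing M rs with
  | nil => exact IsWeaklyRegular.nil R M
  | append_singleton ps p ih =>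
    simp only [List.mem_append, List.mem_singleton, or_imp, forall_and, forall_eq,
      List.length_append, List.length_singleton] at hpsm hlen
    obtain ⟨hpsm, hpm⟩ := hpsm
    obtain ⟨x, rs, rfl⟩ := List.exists_cons_of_length_pos (by lia : 0 < rs.length)
    have hx := ((isRegular_cons_iff M x rs).mp hrs).1
    have := hrs.nontrivial
    rw [Ideal.ofList_append, Ideal.ofList_singleton, ← sup_assoc] at hrad
    obtain ⟨b, hbm, hb, hbmin⟩ := exists_isSMulRegular_notMem_minimalPrimes
      (hrsm x List.mem_cons_self) hx (Module.annihilator R M ⊔ Ideal.ofList ps)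
    have hradb := maximalIdeal_le_radical_sup_span_of_forall_notMem hpm hrad hbmin
    have hps : IsWeaklyRegular (QuotSMulTop b M) ps := by
      obtain ⟨rs', hlen', hrsm', hrs'⟩ := exists_isRegular_quotSMulTop (I := maximalIdeal R)
        (Submodule.top_ne_ideal_smul_of_le_jacobson_annihilator
          (maximalIdeal_le_jacobson _)).symm.lt_top hrs hrsm hb hbm
      refine ih hrs' hrsm' hpsm (by simp only [List.length_cons] at hlen hlen'; lia)
        (hradb.trans (Ideal.radical_mono ?_))
      rw [sup_right_comm]
      exact sup_le_sup_right (annihilator_sup_le_annihilator_quotient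
        (Submodule.ideal_span_singleton_smul b ⊤).le) _
    have hperm : IsWeaklyRegular M (ps ++ [b]) :=
      isWeaklyRegular_of_perm_of_subset_maximalIdeal (IsWeaklyRegular.cons hb hps)
        (List.perm_append_singleton b ps).symm (List.forall_mem_cons.mpr ⟨hbm, hpsm⟩)
    exact isWeaklyRegular_append_of_mem_radical hperm (hrad hbm)

end LocalAlgebra

section GradedAlgebra

open RingTheory.Sequence DirectSum Module

variable {K A : Type*} [Field K] [CommRing A] [Algebra K A]

lemma finrank_map_add_finrank_inf_ker {V W : Type*} [AddCommGroup V] [Module K V]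
    [AddCommGroup W] [Module K W] (f : V →ₗ[K] W) (P : Submodule K V) [FiniteDimensional K P] :
    finrank K (P.map f) + finrank K ↥(P ⊓ LinearMap.ker f) = finrank K P := by
  rw [← (f.domRestrict P).finrank_range_add_finrank_ker, LinearMap.range_domRestrict,
    LinearMap.ker_domRestrict, ← Submodule.finrank_map_subtype_eq,
    Submodule.map_comap_subtype]

variable (𝒜 : ℕ → Submodule K A)

/-- The degree `D` piece of `A ⧸ I`: the classes of the elements of `𝒜 D`. These pieces form a
grading of `A ⧸ I` when `I` is homogeneous. -/
def quotientPiece (I : Ideal A) (D : ℕ) : Submodule K (A ⧸ I) :=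
  (𝒜 D).map (Ideal.Quotient.mkₐ K I).toLinearMap

/-- The Hilbert series of the graded algebra `A ⧸ I`, with integer coefficients so that it can be
multiplied by `1 - t ^ e`. -/
def hilbertSeries (I : Ideal A) : PowerSeries ℤ :=
  PowerSeries.mk fun D => (finrank K (quotientPiece 𝒜 I D) : ℤ)

variable {𝒜}

lemma mk_mem_quotientPiece {x : A} {D : ℕ} (hx : x ∈ 𝒜 D) (I : Ideal A) :
    Ideal.Quotient.mk I x ∈ quotientPiece 𝒜 I D :=
  Submodule.mem_map_of_mem hx

lemma map_factor_quotientPiece {I J : Ideal A} (h : I ≤ J) (D : ℕ) :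
    (quotientPiece 𝒜 I D).map (Ideal.Quotient.factorₐ K h).toLinearMap = quotientPiece 𝒜 J D :=
  (Submodule.map_comp _ _ _).symm

lemma coeff_hilbertSeries_ne_zero {I : Ideal A} [FiniteDimensional K (A ⧸ I)] {x : A} {D : ℕ}
    (hx : x ∈ 𝒜 D) (hxI : x ∉ I) : PowerSeries.coeff D (hilbertSeries 𝒜 I) ≠ 0 := by
  rw [hilbertSeries, PowerSeries.coeff_mk, Nat.cast_ne_zero, Ne, Submodule.finrank_eq_zero]
  exact fun hbot => hxI (Ideal.Quotient.eq_zero_iff_mem.mp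
    ((Submodule.eq_bot_iff _).mp hbot _ (mk_mem_quotientPiece hx I)))

instance [∀ D, FiniteDimensional K (𝒜 D)] (I : Ideal A) (D : ℕ) :
    FiniteDimensional K (quotientPiece 𝒜 I D) :=
  inferInstanceAs (FiniteDimensional K ((𝒜 D).map (Ideal.Quotient.mkₐ K I).toLinearMap))

variable [GradedAlgebra 𝒜] {I : Ideal A} {q x : A} {e D : ℕ}

lemma isHomogeneous_span_range {ι : Type*} {q : ι → A} {e : ι → ℕ} (hq : ∀ i, q i ∈ 𝒜 (e i)) :
    (Ideal.span (Set.range q)).IsHomogeneous 𝒜 :=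
  Ideal.homogeneous_span 𝒜 _ (Set.forall_mem_range.mpr fun i => ⟨e i, hq i⟩)

lemma exists_sub_mul_mem_of_mem_sup_span (hI : I.IsHomogeneous 𝒜) (hq : q ∈ 𝒜 e) (hx : x ∈ 𝒜 D)
    (hxI : x ∈ I ⊔ Ideal.span {q}) (he : e ≤ D) : ∃ y ∈ 𝒜 (D - e), x - q * y ∈ I := by
  obtain ⟨y, z, hz, hyz⟩ := Ideal.mem_span_singleton_sup.mp (sup_comm I _ ▸ hxI)
  refine ⟨decompose 𝒜 y (D - e), SetLike.coe_mem _, ?_⟩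
  have hzD : x - decompose 𝒜 (q * y) D = decompose 𝒜 z D := by
    rw [sub_eq_iff_eq_add', ← decompose_of_mem_same 𝒜 hx, ← hyz, mul_comm]
    simp
  rw [← coe_decompose_mul_of_left_mem_of_le 𝒜 hq he, hzD]
  exact hI D hz

lemma mem_of_mem_sup_span_of_lt (hI : I.IsHomogeneous 𝒜) (hq : q ∈ 𝒜 e) (hx : x ∈ 𝒜 D)
    (hxI : x ∈ I ⊔ Ideal.span {q}) (he : D < e) : x ∈ I := by
  obtain ⟨y, z, hz, hyz⟩ := Ideal.mem_span_singleton_sup.mp (sup_comm I _ ▸ hxI)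
  rw [← decompose_of_mem_same 𝒜 hx, ← hyz, mul_comm, decompose_add, DirectSum.add_apply,
    AddMemClass.coe_add, coe_decompose_mul_of_left_mem_of_not_le 𝒜 hq he.not_ge, zero_add]
  exact hI D hz

lemma quotientPiece_inf_ker_factor_of_le (hI : I.IsHomogeneous 𝒜) (hq : q ∈ 𝒜 e) (he : e ≤ D) :
    quotientPiece 𝒜 I D ⊓ LinearMap.ker
        (Ideal.Quotient.factorₐ K (le_sup_left : I ≤ I ⊔ Ideal.span {q})).toLinearMap =
      (quotientPiece 𝒜 I (D - e)).map (LinearMap.mulLeft K (Ideal.Quotient.mk I q)) := by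
  apply le_antisymm
  · rintro _ ⟨⟨x, hx, rfl⟩, hker⟩
    obtain ⟨y, hy, hxy⟩ :=
      exists_sub_mul_mem_of_mem_sup_span hI hq hx (Ideal.Quotient.eq_zero_iff_mem.mp hker) he
    exact ⟨_, mk_mem_quotientPiece hy I, (Ideal.Quotient.eq.mpr hxy).symm⟩
  · rintro _ ⟨_, ⟨y, hy, rfl⟩, rfl⟩
    refine ⟨mk_mem_quotientPiece (Nat.add_sub_cancel' he ▸ SetLike.mul_mem_graded hq hy) I, ?_⟩
    exact Ideal.Quotient.eq_zero_iff_mem.mpr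
      (Ideal.mem_sup_right (Ideal.mul_mem_right _ _ (Ideal.mem_span_singleton_self q)))

lemma quotientPiece_inf_ker_factor_of_lt (hI : I.IsHomogeneous 𝒜) (hq : q ∈ 𝒜 e) (he : D < e) :
    quotientPiece 𝒜 I D ⊓ LinearMap.ker
        (Ideal.Quotient.factorₐ K (le_sup_left : I ≤ I ⊔ Ideal.span {q})).toLinearMap =
      ⊥ := by
  refine eq_bot_iff.mpr ?_
  rintro _ ⟨⟨x, hx, rfl⟩, hker⟩
  exact Ideal.Quotient.eq_zero_iff_mem.mpr
    (mem_of_mem_sup_span_of_lt hI hq hx (Ideal.Quotient.eq_zero_iff_mem.mp hker) he)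

lemma iSupIndep_quotientPiece (hI : I.IsHomogeneous 𝒜) : iSupIndep (quotientPiece 𝒜 I) := by
  refine (iSupIndep_iff_finsetSum_eq_zero_imp_eq_zero _).mpr fun s v hv hsum D hD => ?_
  choose! x hx hxv using hv
  have hxI : ∑ i ∈ s, x i ∈ I := by
    rw [← Ideal.Quotient.eq_zero_iff_mem, map_sum, ← hsum]
    exact Finset.sum_congr rfl hxv
  have hcomp : (decompose 𝒜 (∑ i ∈ s, x i) D : A) = x D := by
    rw [decompose_sum, DFinsupp.finsetSum_apply, AddSubmonoidClass.coe_finsetSum,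
      Finset.sum_eq_single_of_mem D hD fun i hi hiD => decompose_of_mem_ne 𝒜 (hx i hi) hiD,
      decompose_of_mem_same 𝒜 (hx D hD)]
  rw [← hxv D hD]
  exact Ideal.Quotient.eq_zero_iff_mem.mpr (hcomp ▸ hI D hxI)

lemma exists_quotientPiece_eq_bot (hI : I.IsHomogeneous 𝒜) [FiniteDimensional K (A ⧸ I)] :
    ∃ D₀, ∀ D ≥ D₀, quotientPiece 𝒜 I D = ⊥ := by
  obtain ⟨D₀, hD₀⟩ :=
    (WellFoundedGT.finite_ne_bot_of_iSupIndep (iSupIndep_quotientPiece hI)).bddAbove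
  exact ⟨D₀ + 1, fun D hD => by_contra fun hne => absurd (hD₀ hne) (by lia)⟩

lemma exists_coe_eq_hilbertSeries (hI : I.IsHomogeneous 𝒜) [FiniteDimensional K (A ⧸ I)] :
    ∃ P : Polynomial ℤ, (P : PowerSeries ℤ) = hilbertSeries 𝒜 I := by
  obtain ⟨D₀, hD₀⟩ := exists_quotientPiece_eq_bot hI
  refine ⟨PowerSeries.trunc D₀ (hilbertSeries 𝒜 I), PowerSeries.ext fun D => ?_⟩
  rw [Polynomial.coeff_coe, PowerSeries.coeff_trunc]
  split_ifs with h
  · rfl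
  · rw [hilbertSeries, PowerSeries.coeff_mk, hD₀ D (not_lt.mp h), finrank_bot, Nat.cast_zero]

lemma exists_pow_mem (hI : I.IsHomogeneous 𝒜) [FiniteDimensional K (A ⧸ I)] (hx : x ∈ 𝒜 D)
    (hD : 0 < D) : ∃ k, x ^ k ∈ I := by
  obtain ⟨D₀, hD₀⟩ := exists_quotientPiece_eq_bot hI
  refine ⟨D₀, Ideal.Quotient.eq_zero_iff_mem.mp ?_⟩
  refine (Submodule.eq_bot_iff _).mp (hD₀ (D₀ * D) (Nat.le_mul_of_pos_right _ hD)) _ ?_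
  exact mk_mem_quotientPiece (SetLike.pow_mem_graded D₀ hx) I

-- Degree by degree, `(s * x)_D = s₀ * x_D + (terms involving components of x of lower degree)`.
lemma mem_of_mul_mem_of_isUnit_decompose_zero (hI : I.IsHomogeneous 𝒜) {s : A}
    (hs : IsUnit (decompose 𝒜 s 0 : A)) (hsx : s * x ∈ I) : x ∈ I := by
  refine (hI.mem_iff 𝒜).mpr fun D => ?_
  induction D using Nat.strong_induction_on with
  | _ D ih =>
    have hD := hI D hsx
    have hmem : (0, D) ∈ Finset.HasAntidiagonal.antidiagonal D := by simp
    rw [decompose_mul, coe_mul_apply_eq_sum_antidiagonal, ← Finset.add_sum_erase _ _ hmem,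
      Ideal.add_mem_iff_left] at hD
    · exact (Ideal.unit_mul_mem_iff_mem I hs).mp hD
    · refine Ideal.sum_mem _ fun ij hij => Ideal.mul_mem_left _ _ (ih _ ?_)
      obtain ⟨hne, hsum⟩ := Finset.mem_erase.mp hij
      rw [Finset.HasAntidiagonal.mem_antidiagonal] at hsum
      refine (hsum ▸ Nat.le_add_left _ _ : ij.2 ≤ D).lt_of_ne fun h => hne (Prod.ext ?_ h)
      lia

lemma isWeaklyRegular_of_isWeaklyRegular_localization {m : Ideal A} [m.IsPrime]
    (hm : ∀ s ∉ m, IsUnit (decompose 𝒜 s 0 : A)) {l : List A}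
    (hl : ∀ x ∈ l, SetLike.IsHomogeneousElem 𝒜 x) (B : Type*) [CommRing B] [Algebra A B]
    [IsLocalization.AtPrime B m] (hreg : IsWeaklyRegular B (l.map (algebraMap A B))) :
    IsWeaklyRegular A l := by
  refine ⟨fun i hi => ?_⟩
  have hregi := hreg.regular_mod_prev i (by simpa using hi)
  simp only [isSMulRegular_quotient_iff_mem_of_smul_mem, smul_eq_mul, Ideal.mul_top,
    ← List.map_take, List.getElem_map, ← Ideal.map_ofList] at hregi ⊢
  intro x hx
  have hxB := hregi (algebraMap A B x) (by simpa using Ideal.mem_map_of_mem (algebraMap A B) hx)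
  obtain ⟨s, hs, hsx⟩ :=
    (IsLocalization.algebraMap_mem_map_algebraMap_iff m.primeCompl B _ _).mp hxB
  exact mem_of_mul_mem_of_isUnit_decompose_zero
    (Ideal.homogeneous_span 𝒜 _ fun y hy => hl y (List.mem_of_mem_take hy)) (hm s hs) hsx

variable [∀ D, FiniteDimensional K (𝒜 D)]

theorem hilbertSeries_sup_span_singleton (hI : I.IsHomogeneous 𝒜) (hq : q ∈ 𝒜 e)
    (hreg : IsSMulRegular (A ⧸ I) q) :
    hilbertSeries 𝒜 (I ⊔ Ideal.span {q}) = hilbertSeries 𝒜 I * (1 - PowerSeries.X ^ e) := by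
  ext D
  have hrank := finrank_map_add_finrank_inf_ker
    (Ideal.Quotient.factorₐ K (le_sup_left : I ≤ I ⊔ Ideal.span {q})).toLinearMap
    (quotientPiece 𝒜 I D)
  rw [map_factor_quotientPiece] at hrank
  rw [mul_sub, mul_one, map_sub, PowerSeries.coeff_mul_X_pow']
  simp only [hilbertSeries, PowerSeries.coeff_mk]
  split_ifs with he
  · have hinj : Function.Injective (LinearMap.mulLeft K (Ideal.Quotient.mk I q)) := hreg
    rw [quotientPiece_inf_ker_factor_of_le hI hq he,
      ← (Submodule.equivMapOfInjective _ hinj _).finrank_eq] at hrank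
    lia
  · rw [quotientPiece_inf_ker_factor_of_lt hI hq (not_le.mp he), finrank_bot] at hrank
    lia

theorem hilbertSeries_ofList_map {ι : Type*} {q : ι → A} {e : ι → ℕ} (hq : ∀ i, q i ∈ 𝒜 (e i))
    {l : List ι} (hreg : IsWeaklyRegular A (l.map q)) :
    hilbertSeries 𝒜 (Ideal.ofList (l.map q)) =
      hilbertSeries 𝒜 ⊥ * (l.map fun i => 1 - PowerSeries.X ^ e i).prod := by
  induction l using List.reverseRecOn with
  | nil => simp
  | append_singleton l i ih =>
    have hhom : (Ideal.ofList (l.map q)).IsHomogeneous 𝒜 := by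
      refine Ideal.homogeneous_span 𝒜 _ fun x hx => ?_
      obtain ⟨j, -, rfl⟩ := List.mem_map.mp hx
      exact ⟨e j, hq j⟩
    rw [List.map_append, List.map_singleton, isWeaklyRegular_append_iff,
      isWeaklyRegular_singleton_iff, smul_eq_mul, Ideal.mul_top] at hreg
    rw [List.map_append, List.map_singleton, Ideal.ofList_append, Ideal.ofList_singleton,
      hilbertSeries_sup_span_singleton hhom (hq i) hreg.2, ih hreg.1, List.map_append,
      List.map_singleton, List.prod_append, List.prod_singleton, mul_assoc]

end GradedAlgebra

section VariableIdeal

open RingTheory.Sequence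

lemma ofList_map_eq_span_image {ι R : Type*} [CommSemiring R] (f : ι → R) (l : List ι) :
    Ideal.ofList (l.map f) = Ideal.span (f '' {i | i ∈ l}) := by
  simp only [Ideal.ofList, List.mem_map, Set.image, Set.mem_ofPred_eq]

lemma ofList_map_toList_univ {ι R : Type*} [CommSemiring R] [Fintype ι] (f : ι → R) :
    Ideal.ofList (Finset.univ.toList.map f) = Ideal.span (Set.range f) := by
  simp only [ofList_map_eq_span_image, Finset.mem_toList, Finset.mem_univ, Set.ofPred_true,
    Set.image_univ]

variable {σ R : Type*} [CommRing R]

lemma isWeaklyRegular_map_X {l : List σ} (hl : l.Nodup) :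
    IsWeaklyRegular (MvPolynomial σ R) (l.map (X (R := R))) := by
  refine ⟨fun i hi => ?_⟩
  rw [List.length_map] at hi
  simp only [isSMulRegular_quotient_iff_mem_of_smul_mem, smul_eq_mul, Ideal.mul_top,
    ← List.map_take, ofList_map_eq_span_image, mem_ideal_span_X_image, List.getElem_map]
  intro p hp m hm
  obtain ⟨j, hj, hjm⟩ := hp (Finsupp.single l[i] 1 + m) (by
    rwa [mem_support_iff, coeff_X_mul, ← mem_support_iff])
  have hne : l[i] ≠ j := by
    rintro rfl
    exact List.disjoint_take_drop hl le_rfl hj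
      (List.drop_eq_getElem_cons hi ▸ List.mem_cons_self)
  refine ⟨j, hj, ?_⟩
  rwa [Finsupp.add_apply, Finsupp.single_eq_of_ne hne.symm, zero_add] at hjm

lemma mem_idealOfVars_iff {p : MvPolynomial σ R} :
    p ∈ idealOfVars σ R ↔ constantCoeff p = 0 := by
  rw [← pow_one (idealOfVars σ R), mem_pow_idealOfVars_iff']
  simp only [Nat.lt_one_iff, Finsupp.degree_eq_zero_iff, forall_eq, constantCoeff_eq]

instance [IsDomain R] : (idealOfVars σ R).IsPrime := by
  have hker : idealOfVars σ R = RingHom.ker constantCoeff := Ideal.ext fun _ => mem_idealOfVars_iff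
  exact hker ▸ RingHom.ker_isPrime _

end VariableIdeal

section WeightedHomogeneous

open RingTheory.Sequence DirectSum Module

attribute [local instance] MvPolynomial.weightedGradedAlgebra

variable {σ K : Type*} [Field K] {w : σ → ℕ}

lemma coe_decompose_zero {R : Type*} [CommSemiring R] (hw : ∀ i, 0 < w i)
    (p : MvPolynomial σ R) :
    (decompose (weightedHomogeneousSubmodule R w) p 0 : MvPolynomial σ R) =
      C (constantCoeff p) :=
  (weightedDecomposition.decompose'_apply R w p 0).trans
    (weightedHomogeneousComponent_zero p fun i => (hw i).ne')

lemma isUnit_decompose_zero_of_notMem_idealOfVars (hw : ∀ i, 0 < w i) {p : MvPolynomial σ K}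
    (hp : p ∉ idealOfVars σ K) :
    IsUnit (decompose (weightedHomogeneousSubmodule K w) p 0 : MvPolynomial σ K) := by
  rw [coe_decompose_zero hw]
  exact (IsUnit.mk0 _ (mem_idealOfVars_iff.not.mp hp)).map C

lemma le_idealOfVars_of_isHomogeneous (hw : ∀ i, 0 < w i) {I : Ideal (MvPolynomial σ K)}
    (hI : I.IsHomogeneous (weightedHomogeneousSubmodule K w)) (hne : I ≠ ⊤) :
    I ≤ idealOfVars σ K := fun _ hp => by_contra fun hpm =>
  hne (Ideal.eq_top_of_isUnit_mem I (hI 0 hp) (isUnit_decompose_zero_of_notMem_idealOfVars hw hpm))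

lemma finiteDimensional_weightedHomogeneousSubmodule [Finite σ] (hw : ∀ i, 0 < w i) (D : ℕ) :
    FiniteDimensional K (weightedHomogeneousSubmodule K w D) :=
  Module.Finite.iff_fg.mpr (weightedHomogeneousSubmodule_fg K w (fun i => (hw i).ne') D)

lemma idealOfVars_le_radical (hw : ∀ i, 0 < w i) {I : Ideal (MvPolynomial σ K)}
    (hI : I.IsHomogeneous (weightedHomogeneousSubmodule K w))
    [FiniteDimensional K (MvPolynomial σ K ⧸ I)] : idealOfVars σ K ≤ I.radical := by
  refine Ideal.span_le.mpr (Set.range_subset_iff.mpr fun i => ?_)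
  exact exists_pow_mem hI (isWeightedHomogeneous_X K w i) (hw i)

lemma hilbertSeries_idealOfVars (hw : ∀ i, 0 < w i) :
    hilbertSeries (weightedHomogeneousSubmodule K w) (idealOfVars σ K) = 1 := by
  ext D
  rw [hilbertSeries, PowerSeries.coeff_mk, PowerSeries.coeff_one]
  split_ifs with hD
  · have hspan : quotientPiece (weightedHomogeneousSubmodule K w) (idealOfVars σ K) 0 =
        K ∙ (1 : MvPolynomial σ K ⧸ idealOfVars σ K) := by
      refine le_antisymm ?_ ((Submodule.span_singleton_le_iff_mem _ _).mpr
        (mk_mem_quotientPiece (isWeightedHomogeneous_one K w) _))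
      rintro _ ⟨p, hp, rfl⟩
      have hpC : p = C (constantCoeff p) := by
        rw [← coe_decompose_zero hw, decompose_of_mem_same _ hp]
      exact Submodule.mem_span_singleton.mpr
        ⟨constantCoeff p, (Algebra.algebraMap_eq_smul_one _).symm.trans (congrArg _ hpC.symm)⟩
    rw [hD, hspan, finrank_span_singleton one_ne_zero, Nat.cast_one]
  · have hbot : quotientPiece (weightedHomogeneousSubmodule K w) (idealOfVars σ K) D = ⊥ := by
      refine (Submodule.eq_bot_iff _).mpr ?_
      rintro _ ⟨p, hp, rfl⟩
      refine Ideal.Quotient.eq_zero_iff_mem.mpr (mem_idealOfVars_iff.mpr ?_)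
      exact IsWeightedHomogeneous.coeff_eq_zero hp 0 (by rw [map_zero]; exact Ne.symm hD)
    rw [hbot, finrank_bot, Nat.cast_zero]

lemma isWeaklyRegular_of_finiteDimensional_quotient [Fintype σ] (hw : ∀ i, 0 < w i)
    {q : σ → MvPolynomial σ K} {e : σ → ℕ} (hq : ∀ i, IsWeightedHomogeneous w (q i) (e i))
    [FiniteDimensional K (MvPolynomial σ K ⧸ Ideal.span (Set.range q))]
    (hne : Ideal.span (Set.range q) ≠ ⊤) :
    IsWeaklyRegular (MvPolynomial σ K) (Finset.univ.toList.map q) := by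
  have hI : (Ideal.span (Set.range q)).IsHomogeneous (weightedHomogeneousSubmodule K w) :=
    isHomogeneous_span_range hq
  refine isWeaklyRegular_of_isWeaklyRegular_localization
    (fun _ => isUnit_decompose_zero_of_notMem_idealOfVars hw)
    (List.forall_mem_map.mpr fun i _ => ⟨e i, hq i⟩) (Localization.AtPrime (idealOfVars σ K)) ?_
  set B := Localization.AtPrime (idealOfVars σ K)
  have hmem {x : MvPolynomial σ K} (hx : x ∈ idealOfVars σ K) :
      algebraMap _ B x ∈ IsLocalRing.maximalIdeal B :=
    (IsLocalization.AtPrime.to_map_mem_maximal_iff B (idealOfVars σ K) x).mpr hx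
  have hX (x : MvPolynomial σ K) (hx : x ∈ Finset.univ.toList.map X) : x ∈ idealOfVars σ K := by
    obtain ⟨i, -, rfl⟩ := List.mem_map.mp hx
    exact Ideal.subset_span ⟨i, rfl⟩
  have hqm (x : MvPolynomial σ K) (hx : x ∈ Finset.univ.toList.map q) : x ∈ idealOfVars σ K := by
    obtain ⟨i, -, rfl⟩ := List.mem_map.mp hx
    exact le_idealOfVars_of_isHomogeneous hw hI hne (Ideal.subset_span ⟨i, rfl⟩)
  refine isWeaklyRegular_of_maximalIdeal_le_radical
    (IsWeaklyRegular.isRegular_of_isLocalization_of_mem B (idealOfVars σ K)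
      (isWeaklyRegular_map_X Finset.univ.nodup_toList) hX)
    (List.forall_mem_map.mpr fun x hx => hmem (hX x hx))
    (List.forall_mem_map.mpr fun x hx => hmem (hqm x hx))
    (by simp only [List.length_map, le_refl]) ?_
  rw [← Localization.AtPrime.map_eq_maximalIdeal, ← Ideal.map_ofList, ofList_map_toList_univ]
  exact (Ideal.map_mono (idealOfVars_le_radical hw hI)).trans
    ((Ideal.map_radical_le _).trans (Ideal.radical_mono le_sup_right))

lemma add_sum_le_sum_of_mul_prod_eq_prod {ι R : Type*} [Fintype ι] [CommRing R] [IsDomain R]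
    {P : Polynomial R} {a e : ι → ℕ} (ha : ∀ i, 0 < a i)
    (hP : (P : PowerSeries R) * ∏ i, (1 - PowerSeries.X ^ a i) = ∏ i, (1 - PowerSeries.X ^ e i))
    {D : ℕ} (hD : P.coeff D ≠ 0) : D + ∑ i, a i ≤ ∑ i, e i := by
  have hcoe (b : ι → ℕ) : ((∏ i, (1 - Polynomial.X ^ b i) : Polynomial R) : PowerSeries R) =
      ∏ i, (1 - PowerSeries.X ^ b i) := by
    rw [← Polynomial.coeToPowerSeries.ringHom_apply, map_prod]
    simp only [map_sub, map_one, map_pow, Polynomial.coeToPowerSeries.ringHom_apply,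
      Polynomial.coe_X]
  have hdeg (k : ℕ) : (1 - Polynomial.X ^ k : Polynomial R).natDegree = k := by
    rw [← Polynomial.C_1, Polynomial.natDegree_sub, Polynomial.natDegree_X_pow_sub_C]
  have hne (i : ι) : (1 - Polynomial.X ^ a i : Polynomial R) ≠ 0 :=
    Polynomial.ne_zero_of_natDegree_gt ((ha i).trans_eq (hdeg _).symm)
  rw [← hcoe, ← hcoe, ← Polynomial.coe_mul, Polynomial.coe_inj] at hP
  calc D + ∑ i, a i
      ≤ P.natDegree + (∏ i, (1 - Polynomial.X ^ a i) : Polynomial R).natDegree := by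
        rw [Polynomial.natDegree_prod _ _ fun i _ => hne i]
        simp only [hdeg]
        exact Nat.add_le_add_right (Polynomial.le_natDegree_of_ne_zero hD) _
    _ = (∏ i, (1 - Polynomial.X ^ e i) : Polynomial R).natDegree := by
        rw [← hP, Polynomial.natDegree_mul (fun h => hD (by rw [h, Polynomial.coeff_zero]))
          (Finset.prod_ne_zero_iff.mpr fun i _ => hne i)]
    _ ≤ ∑ i, e i := (Polynomial.natDegree_prod_le _ _).trans_eq (by simp only [hdeg])

theorem add_sum_le_sum_of_notMem_span [Fintype σ] (hw : ∀ i, 0 < w i)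
    {q : σ → MvPolynomial σ K} {e : σ → ℕ} (hq : ∀ i, IsWeightedHomogeneous w (q i) (e i))
    [FiniteDimensional K (MvPolynomial σ K ⧸ Ideal.span (Set.range q))]
    {x : MvPolynomial σ K} {D : ℕ} (hx : IsWeightedHomogeneous w x D)
    (hxq : x ∉ Ideal.span (Set.range q)) : D + ∑ i, w i ≤ ∑ i, e i := by
  have := finiteDimensional_weightedHomogeneousSubmodule (K := K) hw
  set 𝒜 := weightedHomogeneousSubmodule K w
  have hHX := hilbertSeries_ofList_map (𝒜 := 𝒜) (isWeightedHomogeneous_X K w)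
    (isWeaklyRegular_map_X Finset.univ.nodup_toList)
  have hHq := hilbertSeries_ofList_map (𝒜 := 𝒜) hq
    (isWeaklyRegular_of_finiteDimensional_quotient hw hq fun h => hxq (h ▸ Submodule.mem_top))
  rw [ofList_map_toList_univ, hilbertSeries_idealOfVars hw, Finset.prod_map_toList] at hHX
  rw [ofList_map_toList_univ, Finset.prod_map_toList] at hHq
  obtain ⟨P, hP⟩ := exists_coe_eq_hilbertSeries (isHomogeneous_span_range (𝒜 := 𝒜) hq)
  refine add_sum_le_sum_of_mul_prod_eq_prod hw (P := P) ?_ ?_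
  · rw [hP, hHq, mul_right_comm, ← hHX, one_mul]
  · rw [← Polynomial.coeff_coe, hP]
    exact coeff_hilbertSeries_ne_zero hx hxq

lemma isWeightedHomogeneous_pderiv {R : Type*} [CommSemiring R] {G : MvPolynomial σ R} {d : ℕ}
    (hG : IsWeightedHomogeneous w G d) (i : σ) :
    IsWeightedHomogeneous w (pderiv i G) (d - w i) := by
  rcases le_or_gt (w i) d with hle | hlt
  · exact hG.pderiv (Nat.sub_add_cancel hle)
  · rw [pderiv_eq_zero_of_notMem_vars]
    · exact isWeightedHomogeneous_zero _ _ _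
    · rintro hi
      obtain ⟨m, hm, hmi⟩ := (mem_vars_iff_mem_support i).mp hi
      have := Finsupp.le_weight_of_ne_zero' w (Finsupp.mem_support_iff.mp hmi)
      exact hlt.not_ge (this.trans_eq (hG (mem_support_iff.mp hm)))

theorem add_sum_lt_card_mul_of_notMem_span_pderiv [Fintype σ] [Nonempty σ] (hw : ∀ i, 0 < w i)
    {G : MvPolynomial σ K} {d : ℕ} (hG : IsWeightedHomogeneous w G d)
    [FiniteDimensional K (MvPolynomial σ K ⧸ Ideal.span (Set.range fun i => pderiv i G))]
    {x : MvPolynomial σ K} {D : ℕ} (hx : IsWeightedHomogeneous w x D)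
    (hxG : x ∉ Ideal.span (Set.range fun i => pderiv i G)) :
    D + ∑ i, w i < Fintype.card σ * d := by
  have hle := add_sum_le_sum_of_notMem_span hw (isWeightedHomogeneous_pderiv hG) hx hxG
  have hpos : 0 < ∑ i, w i := Finset.sum_pos (fun i _ => hw i) Finset.univ_nonempty
  have hd : 0 < d := by
    by_contra! hd
    simp only [Nat.le_zero.mp hd, zero_tsub, Finset.sum_const_zero] at hle
    lia
  calc D + ∑ i, w i ≤ ∑ i, (d - w i) := hle
    _ < ∑ _i : σ, d := Finset.sum_lt_sum_of_nonempty Finset.univ_nonempty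
        fun i _ => Nat.sub_lt hd (hw i)
    _ = Fintype.card σ * d := by rw [Finset.sum_const, Finset.card_univ, smul_eq_mul]

end WeightedHomogeneous

section Homogenization

lemma isWeightedHomogeneous_rename {σ τ R M : Type*} [CommSemiring R] [AddCommMonoid M]
    (f : σ → τ) {w : τ → M} {p : MvPolynomial σ R} {k : M}
    (hp : IsWeightedHomogeneous (w ∘ f) p k) : IsWeightedHomogeneous w (rename f p) k := by
  intro m hm
  obtain ⟨u, rfl, hu⟩ := coeff_rename_ne_zero _ _ _ hm
  rw [← hp hu, Finsupp.weight_apply, Finsupp.weight_apply]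
  exact Finsupp.sum_mapDomain_index (h := fun i c => c • w i) (fun i => zero_smul ℕ (w i))
    fun i _ _ => add_smul _ _ (w i)

lemma isWeightedHomogeneous_X_zero_pow_mul_rename_succ {R : Type*} [CommSemiring R] {n : ℕ}
    {α : Fin n → ℕ} {p : MvPolynomial (Fin n) R} {k : ℕ} (hp : IsWeightedHomogeneous α p k)
    (m : ℕ) :
    IsWeightedHomogeneous (Fin.cons 1 α : Fin (n + 1) → ℕ) (X 0 ^ m * rename Fin.succ p)
      (m + k) := by
  have hX := (isWeightedHomogeneous_X R (Fin.cons 1 α : Fin (n + 1) → ℕ) 0).pow m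
  rw [Fin.cons_zero, smul_eq_mul, mul_one] at hX
  exact hX.mul (isWeightedHomogeneous_rename Fin.succ (by rwa [Fin.cons_comp_succ]))

lemma isWeightedHomogeneous_homogenization_sub (n d : ℕ) (α : Fin (n + 1) → ℕ)
    (f : MvPolynomial (Fin (n + 1)) ℂ) (b : ℂ) :
    IsWeightedHomogeneous (Fin.cons 1 α : Fin (n + 2) → ℕ)
      (homogenization n d α f - C b * X 0 ^ d) d := by
  refine (IsWeightedHomogeneous.sum _ _ _ fun i hi => ?_).sub (IsWeightedHomogeneous.C_mul ?_ b)
  · have hhom := isWeightedHomogeneous_X_zero_pow_mul_rename_succ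
      (weightedHomogeneousComponent_isWeightedHomogeneous (w := α) i f) (d - i)
    rwa [mul_comm, Nat.sub_add_cancel (Finset.mem_range_succ_iff.mp hi)] at hhom
  · simpa using isWeightedHomogeneous_X_zero_pow_mul_rename_succ (isWeightedHomogeneous_one ℂ α) d

end Homogenization

section MonomialBasis

lemma finiteDimensional_of_span_range_eq_top {ι K V : Type*} [Finite ι] [DivisionRing K]
    [AddCommGroup V] [Module K V] {v : ι → V} (hv : Submodule.span K (Set.range v) = ⊤) :
    FiniteDimensional K V :=
  .of_fg_top (hv ▸ Submodule.fg_span (Set.finite_range v))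

lemma notMem_of_linearIndependent_mk {ι K A : Type*} [Field K] [CommRing A] [Algebra K A]
    {J : Ideal A} {x : ι → A} (hx : LinearIndependent K fun i => Ideal.Quotient.mk J (x i))
    (i : ι) : x i ∉ J := fun h =>
  hx.ne_zero i (Ideal.Quotient.eq_zero_iff_mem.mpr h)

lemma finite_subtype_mem_and_lt {ι : Type*} (I : Finset ι) (N : ι → ℕ) :
    Finite {p : ι × ℕ // p.1 ∈ I ∧ p.2 < N p.1} := by
  refine ((I : Set ι).toFinite.prod (Set.finite_Iio (I.sup N))).subset ?_
  exact fun p hp => ⟨hp.1, hp.2.trans_le (Finset.le_sup hp.1)⟩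

variable {K : Type*} [Field K] {n d : ℕ} {α : Fin (n + 1) → ℕ}

lemma weight_add_sum_lt_of_notMem (hα : ∀ i, 0 < α i) {g : MvPolynomial (Fin (n + 1)) K}
    (hg : IsWeightedHomogeneous α g d)
    [FiniteDimensional K
      (MvPolynomial (Fin (n + 1)) K ⧸ Ideal.span (Set.range fun i => pderiv i g))]
    {β : Fin (n + 1) →₀ ℕ}
    (hβ : monomial β (1 : K) ∉ Ideal.span (Set.range fun i => pderiv i g)) :
    Finsupp.weight α β + ∑ i, α i < (n + 1) * d := by
  simpa only [Fintype.card_fin] using add_sum_lt_card_mul_of_notMem_span_pderiv hα hg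
    (isWeightedHomogeneous_monomial α β 1 rfl) hβ

lemma add_one_add_weight_add_sum_lt_of_notMem (hα : ∀ i, 0 < α i)
    {G : MvPolynomial (Fin (n + 2)) K}
    (hG : IsWeightedHomogeneous (Fin.cons 1 α : Fin (n + 2) → ℕ) G d)
    [FiniteDimensional K
      (MvPolynomial (Fin (n + 2)) K ⧸ Ideal.span (Set.range fun i => pderiv i G))]
    {β : Fin (n + 1) →₀ ℕ} {β₀ : ℕ}
    (hβ : X 0 ^ β₀ * rename Fin.succ (monomial β (1 : K)) ∉
      Ideal.span (Set.range fun i => pderiv i G)) :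
    β₀ + 1 + (Finsupp.weight α β + ∑ i, α i) < (n + 2) * d := by
  have hlt := add_sum_lt_card_mul_of_notMem_span_pderiv
    (Fin.cases (by rw [Fin.cons_zero]; exact one_pos) fun i => by rw [Fin.cons_succ]; exact hα i)
    hG (isWeightedHomogeneous_X_zero_pow_mul_rename_succ
      (isWeightedHomogeneous_monomial α β 1 rfl) β₀) hβ
  rw [Fin.sum_cons, Fintype.card_fin] at hlt
  lia

lemma sum_add_one_mul_eq_weight_add_sum (α : Fin n → ℕ) (β : Fin n →₀ ℕ) :
    ∑ i, ((β i : ℚ) + 1) * (α i : ℚ) = (Finsupp.weight α β + ∑ i, α i : ℕ) := by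
  simp only [Finsupp.weight_eq_sum, smul_eq_mul, add_mul, one_mul, Finset.sum_add_distrib]
  push_cast
  rfl

end MonomialBasis

theorem dbeta_bound_general {K : Type*} [Field K] (n : ℕ) (α : Fin (n + 1) → ℕ)
    (hαpos : ∀ i, 0 < α i) (d : ℕ)
    (g : MvPolynomial (Fin (n + 1)) K) (hg : IsWeightedHomogeneous α g d)
    (I : Finset (Fin (n + 1) →₀ ℕ))
    (hIindep : LinearIndependent K (fun β : I =>
      Ideal.Quotient.mk (Ideal.span (Set.range fun i => pderiv i g))
        (monomial (β : Fin (n + 1) →₀ ℕ) (1 : K))))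
    (hIspan : Submodule.span K (Set.range fun β : I =>
      Ideal.Quotient.mk (Ideal.span (Set.range fun i => pderiv i g))
        (monomial (β : Fin (n + 1) →₀ ℕ) (1 : K))) = ⊤)
    (G : MvPolynomial (Fin (n + 2)) K)
    (hG : IsWeightedHomogeneous (Fin.cons 1 α : Fin (n + 2) → ℕ) G d)
    (dβ : (Fin (n + 1) →₀ ℕ) → ℕ)
    (hdβindep : LinearIndependent K
      (fun p : {p : (Fin (n + 1) →₀ ℕ) × ℕ // p.1 ∈ I ∧ p.2 < dβ p.1} =>
        Ideal.Quotient.mk (Ideal.span (Set.range fun i => pderiv i G))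
          (X 0 ^ p.1.2 * rename Fin.succ (monomial p.1.1 (1 : K)))))
    (hdβspan : Submodule.span K
      (Set.range fun p : {p : (Fin (n + 1) →₀ ℕ) × ℕ // p.1 ∈ I ∧ p.2 < dβ p.1} =>
        Ideal.Quotient.mk (Ideal.span (Set.range fun i => pderiv i G))
          (X 0 ^ p.1.2 * rename Fin.succ (monomial p.1.1 (1 : K)))) = ⊤) :
    ∀ β ∈ I,
      (dβ β : ℚ) < d * ((n : ℚ) + 2 - (∑ i, ((β i : ℚ) + 1) * (α i : ℚ)) / d) ∧
      ∀ β₀ : ℕ, β₀ < dβ β →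
        0 < (∑ i, ((β i : ℚ) + 1) * (α i : ℚ)) / d + ((β₀ : ℚ) + 1) / d ∧
        (∑ i, ((β i : ℚ) + 1) * (α i : ℚ)) / d + ((β₀ : ℚ) + 1) / d < (n : ℚ) + 2 := by
  intro β hβ
  have := finiteDimensional_of_span_range_eq_top hIspan
  have := finite_subtype_mem_and_lt I dβ
  have := finiteDimensional_of_span_range_eq_top hdβspan
  have hS := weight_add_sum_lt_of_notMem hαpos hg
    (notMem_of_linearIndependent_mk hIindep ⟨β, hβ⟩)
  have hβ₀ (β₀ : ℕ) (h : β₀ < dβ β) := add_one_add_weight_add_sum_lt_of_notMem hαpos hG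
    (notMem_of_linearIndependent_mk hdβindep ⟨(β, β₀), hβ, h⟩)
  rw [sum_add_one_mul_eq_weight_add_sum]
  set S := Finsupp.weight α β + ∑ i, α i
  have hd : 0 < d := Nat.pos_of_mul_pos_left (S.zero_le.trans_lt hS)
  have hdβ : dβ β + S < (n + 2) * d := by
    cases h : dβ β with
    | zero => lia
    | succ N => exact hβ₀ N (by lia)
  have hdq : (0 : ℚ) < d := Nat.cast_pos.mpr hd
  refine ⟨?_, fun β₀ h => ⟨by positivity, ?_⟩⟩
  · rw [mul_sub, mul_div_cancel₀ _ hdq.ne', lt_sub_iff_add_lt, mul_comm]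
    exact_mod_cast hdβ
  · rw [← add_div, div_lt_iff₀ hdq, add_comm]
    exact_mod_cast hβ₀ β₀ h

/-- Let `f` be strongly tame of weighted degree `d`, `b` a regular value of
`f`, and `β ↦ d_β` a function such that the monomials `x₀^{β₀}x^β`, `β ∈ I`,
`0 ≤ β₀ ≤ d_β - 1`, form a ℂ-basis of `ℂ[x₀,x]/⟨∂F_b/∂xᵢ : i = 0,…,n+1⟩`.  Then for every
`β ∈ I`, `d_β < d·(n + 2 - A_β)` where `A_β = Σᵢ (βᵢ+1)αᵢ/d`; equivalently every basis
monomial `x₀^{β₀}x^β` satisfies `0 < A_β + (β₀+1)/d < n + 2`. -/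
theorem dbeta_bound
    (n : ℕ) (hn : 1 ≤ n) (α : Fin (n + 1) → ℕ)
    (hαpos : ∀ i, 0 < α i) (hα : Finset.univ.gcd α = 1)
    (f : MvPolynomial (Fin (n + 1)) ℂ) (d : ℕ)
    (hd : MvPolynomial.weightedTotalDegree α f = d)
    (g : MvPolynomial (Fin (n + 1)) ℂ)
    (hg : g = weightedHomogeneousComponent α d f)
    (hg0 : g ≠ 0)
    (htame : ∀ x : Fin (n + 1) → ℂ, (∀ i, eval x (pderiv i g) = 0) → x = 0)
    (I : Finset (Fin (n + 1) →₀ ℕ))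
    (hIindep : LinearIndependent ℂ (fun β : I =>
      Ideal.Quotient.mk (Ideal.span (Set.range fun i => pderiv i g))
        (monomial (β : Fin (n + 1) →₀ ℕ) (1 : ℂ))))
    (hIspan : Submodule.span ℂ (Set.range fun β : I =>
      Ideal.Quotient.mk (Ideal.span (Set.range fun i => pderiv i g))
        (monomial (β : Fin (n + 1) →₀ ℕ) (1 : ℂ))) = ⊤)
    (b : ℂ)
    (hb : b ∉ (fun x => eval x f) '' {x : Fin (n + 1) → ℂ | ∀ i, eval x (pderiv i f) = 0})
    (dβ : (Fin (n + 1) →₀ ℕ) → ℕ)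
    (hdβindep : LinearIndependent ℂ
      (fun p : {p : (Fin (n + 1) →₀ ℕ) × ℕ // p.1 ∈ I ∧ p.2 < dβ p.1} =>
        Ideal.Quotient.mk (fullJacobianIdeal n d α f b)
          (X 0 ^ (p : (Fin (n + 1) →₀ ℕ) × ℕ).2 *
            rename Fin.succ (monomial (p : (Fin (n + 1) →₀ ℕ) × ℕ).1 (1 : ℂ)))))
    (hdβspan : Submodule.span ℂ
      (Set.range fun p : {p : (Fin (n + 1) →₀ ℕ) × ℕ // p.1 ∈ I ∧ p.2 < dβ p.1} =>
        Ideal.Quotient.mk (fullJacobianIdeal n d α f b)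
          (X 0 ^ (p : (Fin (n + 1) →₀ ℕ) × ℕ).2 *
            rename Fin.succ (monomial (p : (Fin (n + 1) →₀ ℕ) × ℕ).1 (1 : ℂ)))) = ⊤) :
    ∀ β ∈ I,
      (dβ β : ℚ) < d * ((n : ℚ) + 2 - (∑ i, ((β i : ℚ) + 1) * (α i : ℚ)) / d) ∧
      ∀ β₀ : ℕ, β₀ < dβ β →
        0 < (∑ i, ((β i : ℚ) + 1) * (α i : ℚ)) / d + ((β₀ : ℚ) + 1) / d ∧
        (∑ i, ((β i : ℚ) + 1) * (α i : ℚ)) / d + ((β₀ : ℚ) + 1) / d < (n : ℚ) + 2 :=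
  dbeta_bound_general n α hαpos d g
    (hg ▸ weightedHomogeneousComponent_isWeightedHomogeneous d f) I hIindep hIspan _
    (isWeightedHomogeneous_homogenization_sub n d α f b) dβ hdβindep hdβspan
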